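/- arXiv:2510.05076 — 2 statements merged into one kernel-verified Lean document; each statement's English description precedes it below -/
import Mathlib

section
/- Let p ≥ 5 be a prime number. The rectangular simplex Δ(2, 3, p) ⊂ ℝ³ is maximally non-normal (i.e. μ_norm(Δ(2, 3, p)) = 2) if and only if p ≡ −1 (mod 3), i.e. p ≡ 2 (mod 3). -/
/-- A point of `ℝⁿ` is a lattice point if all its coordinates are integers. -/
def IsLatticePoint {n : ℕ} (x : Fin n → ℝ) : Prop := ∀ i, ∃ z : ℤ, x i = (z : ℝ)

/-- The `k`-th dilation `kS = {k • x : x ∈ S}` of a set `S ⊆ ℝⁿ`. -/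
def dilate {n : ℕ} (k : ℕ) (P : Set (Fin n → ℝ)) : Set (Fin n → ℝ) :=
  (fun x => (k : ℝ) • x) '' P

/-- Every lattice point of `kP` is a sum of `k` lattice points of `P`. -/
def IsIDP {n : ℕ} (k : ℕ) (P : Set (Fin n → ℝ)) : Prop :=
  ∀ x ∈ dilate k P, IsLatticePoint x →
    ∃ f : Fin k → (Fin n → ℝ), (∀ i, f i ∈ P ∧ IsLatticePoint (f i)) ∧ x = ∑ i, f i

/-- A polytope is normal if for every `k ≥ 1` every lattice point of `kP`
is a sum of `k` lattice points of `P`. -/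
def IsNormal {n : ℕ} (P : Set (Fin n → ℝ)) : Prop := ∀ k : ℕ, 1 ≤ k → IsIDP k P

/-- A polytope is very ample if there is `k₀` such that for every `k ≥ k₀` every
lattice point of `kP` is a sum of `k` lattice points of `P`. -/
def IsVeryAmple {n : ℕ} (P : Set (Fin n → ℝ)) : Prop :=
  ∃ k₀ : ℕ, ∀ k : ℕ, k₀ ≤ k → IsIDP k P

/-- The rectangular simplex `Δ(λ) = conv{0, λ₁e₁, …, λₙeₙ}`. -/
def rectSimplex {n : ℕ} (lam : Fin n → ℕ) : Set (Fin n → ℝ) :=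
  convexHull ℝ (insert 0 (Set.range fun i => Pi.single i ((lam i : ℝ))))

/-- An edge of `P`: a segment between two distinct extreme points of `P`
which is an extreme subset of `P`. -/
def IsEdge {n : ℕ} (P : Set (Fin n → ℝ)) (v w : Fin n → ℝ) : Prop :=
  v ≠ w ∧ v ∈ P.extremePoints ℝ ∧ w ∈ P.extremePoints ℝ ∧
    IsExtreme ℝ P (segment ℝ v w)

/-- `P` has at least `k` lattice points on every edge. -/
def LPE {n : ℕ} (k : ℕ) (P : Set (Fin n → ℝ)) : Prop :=
  ∀ v w, IsEdge P v w →
    ∃ S : Finset (Fin n → ℝ), k ≤ S.card ∧ ∀ x ∈ S, x ∈ segment ℝ v w ∧ IsLatticePoint x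

/-- The normality index: the least `k₀` such that `kP` is normal for all `k ≥ k₀`. -/
noncomputable def munorm {n : ℕ} (P : Set (Fin n → ℝ)) : ℕ :=
  sInf {k₀ : ℕ | ∀ k : ℕ, k₀ ≤ k → IsNormal (dilate k P)}

/-- Almost 1-normality: with `L = lcm λᵢ`, `Lᵢ = L/λᵢ`, `d = gcd Lᵢ`, the number
`L - d` lies in the additive submonoid of `ℕ` generated by the `Lᵢ`. -/
def IsA1N {n : ℕ} (lam : Fin n → ℕ) : Prop :=
  Finset.univ.lcm lam - Finset.univ.gcd (fun i => Finset.univ.lcm lam / lam i) ∈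
    AddSubmonoid.closure (Set.range fun i => Finset.univ.lcm lam / lam i)

lemma memSimplex_iff (p : ℕ) (hp : 0 < p) (x : Fin 3 → ℝ) :
    x ∈ rectSimplex ![2, 3, p] ↔
      0 ≤ x 0 ∧ 0 ≤ x 1 ∧ 0 ≤ x 2 ∧ 3 * p * x 0 + 2 * p * x 1 + 6 * x 2 ≤ 6 * (p : ℝ) := by
  have hpr : (0 : ℝ) < p := by exact_mod_cast hp
  constructor
  · intro hx
    have hc : Convex ℝ {x : Fin 3 → ℝ | 0 ≤ x 0 ∧ 0 ≤ x 1 ∧ 0 ≤ x 2 ∧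
        3 * p * x 0 + 2 * p * x 1 + 6 * x 2 ≤ 6 * (p : ℝ)} := by
      intro u hu v hv a b ha hb hab
      obtain ⟨h1, h2, h3, h4⟩ := hu
      obtain ⟨g1, g2, g3, g4⟩ := hv
      simp only [Set.mem_setOf_eq, Pi.add_apply, Pi.smul_apply, smul_eq_mul]
      refine ⟨by positivity, by positivity, by positivity, ?_⟩
      have e1 := mul_le_mul_of_nonneg_left h4 ha
      have e2 := mul_le_mul_of_nonneg_left g4 hb
      have : a * (6 * (p : ℝ)) + b * (6 * p) = 6 * p := by
        rw [← add_mul, hab, one_mul]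
      nlinarith
    refine convexHull_min ?_ hc hx
    intro y hy
    rcases hy with rfl | ⟨i, rfl⟩
    · simp
    · fin_cases i <;> simp [Pi.single_apply] <;> first | done | linarith | nlinarith
  · rintro ⟨h0, h1, h2, h3⟩
    have key := (convex_convexHull ℝ
      (insert 0 (Set.range fun i : Fin 3 => Pi.single i (((![2, 3, p] : Fin 3 → ℕ) i : ℝ))))).sum_mem
      (t := Finset.univ) (w := ![1 - x 0 / 2 - x 1 / 3 - x 2 / p, x 0 / 2, x 1 / 3, x 2 / p])
      (z := ![0, Pi.single 0 (2 : ℝ), Pi.single 1 (3 : ℝ), Pi.single 2 (p : ℝ)]) ?_ ?_ ?_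
    · unfold rectSimplex
      convert key using 1
      ext j
      fin_cases j <;> simp [Fin.sum_univ_four, hpr.ne']
    · intro i _
      fin_cases i
      · have : 1 - x 0 / 2 - x 1 / 3 - x 2 / p
          = (6 * p - (3 * p * x 0 + 2 * p * x 1 + 6 * x 2)) / (6 * p) := by
          field_simp
          ring
        simp only [Fin.zero_eta, Matrix.cons_val_zero]
        rw [this]
        apply div_nonneg <;> linarith
      · simp; positivity
      · simp; positivity
      · simp; positivity
    · simp [Fin.sum_univ_four]
      ring
    · intro i _
      apply subset_convexHull
      fin_cases i
      · simp
      · exact Or.inr ⟨0, by simp⟩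
      · exact Or.inr ⟨1, by simp⟩
      · exact Or.inr ⟨2, by simp⟩

lemma memDilate_iff (p k : ℕ) (hp : 0 < p) (hk : 0 < k) (x : Fin 3 → ℝ) :
    x ∈ dilate k (rectSimplex ![2, 3, p]) ↔
      0 ≤ x 0 ∧ 0 ≤ x 1 ∧ 0 ≤ x 2 ∧ 3 * p * x 0 + 2 * p * x 1 + 6 * x 2 ≤ 6 * (p : ℝ) * k := by
  have hkr : (0 : ℝ) < k := by exact_mod_cast hk
  constructor
  · rintro ⟨y, hy, rfl⟩
    rw [memSimplex_iff p hp] at hy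
    obtain ⟨h0, h1, h2, h3⟩ := hy
    simp only [Pi.smul_apply, smul_eq_mul]
    refine ⟨by positivity, by positivity, by positivity, ?_⟩
    have := mul_le_mul_of_nonneg_left h3 hkr.le
    nlinarith
  · rintro ⟨h0, h1, h2, h3⟩
    refine ⟨(k : ℝ)⁻¹ • x, ?_, by simp [smul_smul, hkr.ne']⟩
    rw [memSimplex_iff p hp]
    simp only [Pi.smul_apply, smul_eq_mul]
    refine ⟨by positivity, by positivity, by positivity, ?_⟩
    have := mul_le_mul_of_nonneg_left h3 (inv_nonneg.mpr hkr.le)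
    have e : (k : ℝ)⁻¹ * (6 * (p : ℝ) * k) = 6 * p := by field_simp
    nlinarith

lemma dilate_dilate' {n : ℕ} (m k : ℕ) (P : Set (Fin n → ℝ)) :
    dilate m (dilate k P) = dilate (k * m) P := by
  unfold dilate
  rw [Set.image_image]
  congr 1
  ext x i
  simp
  ring

lemma greedy (p T : ℕ) (hp : 2 ≤ p) (a b c : ℕ) (h : T < 3 * p * a + 2 * p * b + 6 * c) :
    ∃ a' b' c', a' ≤ a ∧ b' ≤ b ∧ c' ≤ c ∧ 3 * p * a' + 2 * p * b' + 6 * c' ≤ T ∧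
      T < 3 * p * a' + 2 * p * b' + 6 * c' + 3 * p := by
  induction a with
  | succ a ih =>
    by_cases h' : T < 3 * p * a + 2 * p * b + 6 * c
    · obtain ⟨a', b', c', h1, h2, h3, h4⟩ := ih h'
      exact ⟨a', b', c', by omega, h2, h3, h4⟩
    · rw [mul_add] at h
      exact ⟨a, b, c, by omega, le_rfl, le_rfl, by omega, by omega⟩
  | zero =>
    induction b with
    | succ b ih =>
      by_cases h' : T < 3 * p * 0 + 2 * p * b + 6 * c
      · obtain ⟨a', b', c', h1, h2, h3, h4⟩ := ih h'
        exact ⟨a', b', c', h1, by omega, h3, h4⟩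
      · rw [mul_add (2 * p)] at h
        exact ⟨0, b, c, by omega, by omega, le_rfl, by omega, by omega⟩
    | zero =>
      induction c with
      | succ c ih =>
        by_cases h' : T < 3 * p * 0 + 2 * p * 0 + 6 * c
        · obtain ⟨a', b', c', h1, h2, h3, h4⟩ := ih h'
          exact ⟨a', b', c', h1, h2, by omega, h4⟩
        · exact ⟨0, 0, c, by omega, by omega, by omega, by omega, by omega⟩
      | zero => simp at h

lemma splitLem (p k m : ℕ) (hp : 2 ≤ p) (hk : 1 ≤ k) (hkp : 2 ≤ k ∨ p % 6 = 1) (a b c : ℕ)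
    (h : 3 * p * a + 2 * p * b + 6 * c ≤ 6 * p * (k * (m + 1))) :
    ∃ a₁ b₁ c₁ a₂ b₂ c₂, a = a₁ + a₂ ∧ b = b₁ + b₂ ∧ c = c₁ + c₂ ∧
      3 * p * a₁ + 2 * p * b₁ + 6 * c₁ ≤ 6 * p * k ∧
      3 * p * a₂ + 2 * p * b₂ + 6 * c₂ ≤ 6 * p * (k * m) := by
  by_cases h0 : 3 * p * a + 2 * p * b + 6 * c ≤ 6 * p * k
  · exact ⟨a, b, c, 0, 0, 0, by simp, by simp, by simp, h0, by simp⟩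
  have hd0 : (0 : ℤ) ≤ (c : ℤ) / (p : ℤ) := by positivity
  by_cases hV : k ≤ a / 2 + b / 3 + c / p
  · obtain ⟨i, j, l, hi, hj, hl, hs⟩ : ∃ i j l, i ≤ a / 2 ∧ j ≤ b / 3 ∧ l ≤ c / p ∧ i + j + l = k :=
      ⟨min (a / 2) k, min (b / 3) (k - min (a / 2) k),
        k - min (a / 2) k - min (b / 3) (k - min (a / 2) k), by omega, by omega, by omega, by omega⟩
    have hl' : p * l ≤ c := le_trans (Nat.mul_le_mul_left p hl) (Nat.mul_div_le c p)
    obtain ⟨a₂, ha⟩ : ∃ a₂, a = 2 * i + a₂ := ⟨a - 2 * i, by omega⟩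
    obtain ⟨b₂, hb⟩ : ∃ b₂, b = 3 * j + b₂ := ⟨b - 3 * j, by omega⟩
    obtain ⟨c₂, hc⟩ : ∃ c₂, c = p * l + c₂ := ⟨c - p * l, by omega⟩
    refine ⟨2 * i, 3 * j, p * l, a₂, b₂, c₂, ha, hb, hc, ?_, ?_⟩
    · rw [← hs]; apply le_of_eq; ring
    · subst ha hb hc hs; nlinarith
  have hm : 1 ≤ m := by
    rcases Nat.eq_zero_or_pos m with rfl | h1
    · simp at h; omega
    · exact h1
  have hkm : k ≤ k * m := Nat.le_mul_of_pos_right k hm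
  have hub : 3 * p * a + 2 * p * b + 6 * c + 6 ≤ 6 * p * (k - 1) + 13 * p := by
    have e1 : a ≤ 2 * (a / 2) + 1 := by omega
    have e2 : b ≤ 3 * (b / 3) + 2 := by omega
    have e3 : c + 1 ≤ p * (c / p) + p := by
      have := Nat.lt_mul_div_succ c (show 0 < p by omega)
      rw [mul_add] at this; omega
    have e4 : a / 2 + b / 3 + c / p ≤ k - 1 := by omega
    have f1 := Nat.mul_le_mul_left (3 * p) e1
    have f2 := Nat.mul_le_mul_left (2 * p) e2
    have f4 := Nat.mul_le_mul_left (6 * p) e4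
    nlinarith
  have hk1 : 6 * p * (k - 1) + 6 * p = 6 * p * k := by
    obtain ⟨k, rfl⟩ := Nat.exists_eq_add_of_le' hk
    simp; ring
  by_cases h2 : 2 ≤ k * m
  · obtain ⟨a', b', c', ha, hb, hc, h3, h4⟩ := greedy p (6 * p * k) hp a b c (by omega)
    obtain ⟨a₂, rfl⟩ := Nat.exists_eq_add_of_le ha
    obtain ⟨b₂, rfl⟩ := Nat.exists_eq_add_of_le hb
    obtain ⟨c₂, rfl⟩ := Nat.exists_eq_add_of_le hc
    refine ⟨a', b', c', a₂, b₂, c₂, rfl, rfl, rfl, h3, ?_⟩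
    have := Nat.mul_le_mul_left (6 * p) h2
    nlinarith
  · have hk' : k = 1 := by omega
    subst hk'
    have hm' : m = 1 := by omega
    subst hm'
    have ha : a ≤ 1 := by omega
    have hb : b ≤ 2 := by omega
    have hc : c < p := by
      by_contra hcc
      have := Nat.div_pos (show p ≤ c by omega) (by omega)
      omega
    obtain ⟨q, rfl⟩ : ∃ q, p = 6 * q + 1 := ⟨p / 6, by omega⟩
    interval_cases a <;> interval_cases b
    · omega
    · exact ⟨0, 1, min c (4 * q), 0, 0, c - min c (4 * q), by omega, by omega, by omega, by omega, by omega⟩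
    · exact ⟨0, 1, min c (4 * q), 0, 1, c - min c (4 * q), by omega, by omega, by omega, by omega, by omega⟩
    · exact ⟨1, 0, min c (3 * q), 0, 0, c - min c (3 * q), by omega, by omega, by omega, by omega, by omega⟩
    · exact ⟨1, 0, min c (3 * q), 0, 1, c - min c (3 * q), by omega, by omega, by omega, by omega, by omega⟩
    · exact ⟨1, 1, min c q, 0, 1, c - min c q, by omega, by omega, by omega, by omega, by omega⟩

lemma decomp (p k m : ℕ) (hp : 2 ≤ p) (hk : 1 ≤ k) (hkp : 2 ≤ k ∨ p % 6 = 1) : ∀ (a b c : ℕ),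
    3 * p * a + 2 * p * b + 6 * c ≤ 6 * p * (k * m) →
    ∃ f g h : Fin m → ℕ, a = ∑ i, f i ∧ b = ∑ i, g i ∧ c = ∑ i, h i ∧
      ∀ i, 3 * p * f i + 2 * p * g i + 6 * h i ≤ 6 * p * k := by
  induction m with
  | zero =>
    intro a b c h
    have hp0 : p ≠ 0 := by omega
    simp [hp0] at h
    refine ⟨fun _ => 0, fun _ => 0, fun _ => 0, by simp [h], by simp [h], by simp [h], fun i => i.elim0⟩
  | succ m ih =>
    intro a b c h
    obtain ⟨a₁, b₁, c₁, a₂, b₂, c₂, ha, hb, hc, h1, h2⟩ := splitLem p k m hp hk hkp a b c h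
    obtain ⟨f, g, h, hf, hg, hh, hw⟩ := ih a₂ b₂ c₂ h2
    refine ⟨Fin.cons a₁ f, Fin.cons b₁ g, Fin.cons c₁ h, by simp [Fin.sum_univ_succ, ha, hf],
      by simp [Fin.sum_univ_succ, hb, hg], by simp [Fin.sum_univ_succ, hc, hh], ?_⟩
    intro i
    refine Fin.cases ?_ ?_ i
    · simpa using h1
    · intro i; simpa using hw i

lemma latticeNat {x : ℝ} (h : ∃ z : ℤ, x = z) (h0 : 0 ≤ x) : ∃ a : ℕ, x = a := by
  obtain ⟨z, rfl⟩ := h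
  have : 0 ≤ z := by exact_mod_cast h0
  exact ⟨z.toNat, by exact_mod_cast (Int.toNat_of_nonneg this).symm⟩

lemma normalDil (p k : ℕ) (hp : 2 ≤ p) (hk : 1 ≤ k) (hkp : 2 ≤ k ∨ p % 6 = 1) :
    IsNormal (dilate k (rectSimplex ![2, 3, p])) := by
  intro m hm x hx hl
  rw [dilate_dilate', memDilate_iff p _ (by omega) (Nat.mul_pos hk hm)] at hx
  obtain ⟨h0, h1, h2, h3⟩ := hx
  obtain ⟨a, ha⟩ := latticeNat (hl 0) h0
  obtain ⟨b, hb⟩ := latticeNat (hl 1) h1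
  obtain ⟨c, hc⟩ := latticeNat (hl 2) h2
  rw [ha, hb, hc] at h3
  obtain ⟨f, g, h, hf, hg, hh, hw⟩ := decomp p k m hp hk hkp a b c (by exact_mod_cast h3)
  refine ⟨fun i => ![(f i : ℝ), g i, h i], fun i => ⟨?_, ?_⟩, ?_⟩
  · rw [memDilate_iff p k (by omega) hk]
    refine ⟨by simp, by simp, by simp, ?_⟩
    simp
    exact_mod_cast hw i
  · intro j
    fin_cases j
    · exact ⟨f i, by simp⟩
    · exact ⟨g i, by simp⟩
    · exact ⟨h i, by simp⟩
  · ext j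
    rw [Finset.sum_apply]
    fin_cases j
    · simp [ha, hf]
    · simp [hb, hg]
    · simp [hc, hh]

lemma notNormal (q : ℕ) : ¬ IsNormal (dilate 1 (rectSimplex ![2, 3, 6 * q + 5])) := by
  intro hN
  obtain ⟨f, hf, hs⟩ := hN 2 (by omega) ![1, 2, ((5 * q + 4 : ℕ) : ℝ)] (by
    rw [dilate_dilate', memDilate_iff _ _ (by omega) (by omega)]
    refine ⟨by simp, by simp, ?_, ?_⟩
    · simp; positivity
    · simp; nlinarith) (by
    intro j
    fin_cases j
    · exact ⟨1, by simp⟩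
    · exact ⟨2, by simp⟩
    · exact ⟨(5 * q + 4 : ℕ), by simp⟩)
  have key : ∀ i, ∃ a b c : ℕ, f i 0 = a ∧ f i 1 = b ∧ f i 2 = c ∧
      3 * (6 * q + 5) * a + 2 * (6 * q + 5) * b + 6 * c ≤ 6 * (6 * q + 5) := by
    intro i
    obtain ⟨hm, hl⟩ := hf i
    rw [memDilate_iff _ _ (by omega) (by omega)] at hm
    obtain ⟨h0, h1, h2, h3⟩ := hm
    obtain ⟨a, ha⟩ := latticeNat (hl 0) h0
    obtain ⟨b, hb⟩ := latticeNat (hl 1) h1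
    obtain ⟨c, hc⟩ := latticeNat (hl 2) h2
    rw [ha, hb, hc] at h3
    refine ⟨a, b, c, ha, hb, hc, ?_⟩
    have : 3 * (6 * q + 5) * a + 2 * (6 * q + 5) * b + 6 * c ≤ 6 * (6 * q + 5) * 1 := by
      exact_mod_cast h3
    omega
  obtain ⟨a, b, c, ha, hb, hc, h⟩ := key 0
  obtain ⟨a', b', c', ha', hb', hc', h'⟩ := key 1
  have s0 := congrFun hs 0
  have s1 := congrFun hs 1
  have s2 := congrFun hs 2
  simp only [Fin.sum_univ_two, Pi.add_apply, ha, hb, hc, ha', hb', hc', Matrix.cons_val_zero,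
    Matrix.cons_val_one, Matrix.cons_val] at s0 s1 s2
  have t0 : 1 = a + a' := by exact_mod_cast s0
  have t1 : 2 = b + b' := by exact_mod_cast s1
  have t2 : 5 * q + 4 = c + c' := by exact_mod_cast s2
  have hA : a ≤ 1 := by omega
  have hB : b ≤ 2 := by omega
  obtain rfl : a' = 1 - a := by omega
  obtain rfl : b' = 2 - b := by omega
  interval_cases a <;> interval_cases b <;> omega

/-- For a prime `p ≥ 5`, the simplex `Δ(2, 3, p)` is maximally
non-normal (`μ_norm = 2`) iff `p ≡ 2 (mod 3)`. -/
theorem stmt_14 (p : ℕ) (hp : p.Prime) (hp5 : 5 ≤ p) :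
    munorm (rectSimplex ![2, 3, p]) = 2 ↔ p % 3 = 2 := by
  have h2 : p % 2 = 1 := by
    rcases hp.eq_two_or_odd with h | h <;> omega
  have h3 : p % 3 ≠ 0 := by
    intro h
    have := (Nat.prime_dvd_prime_iff_eq Nat.prime_three hp).mp (Nat.dvd_of_mod_eq_zero h)
    omega
  constructor
  · intro h
    by_contra hne
    have : munorm (rectSimplex ![2, 3, p]) ≤ 1 :=
      Nat.sInf_le (fun k hk => normalDil p k (by omega) hk (Or.inr (by omega)))
    omega
  · intro h
    obtain ⟨q, rfl⟩ : ∃ q, p = 6 * q + 5 := ⟨p / 6, by omega⟩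
    have hmem : 2 ∈ {k₀ : ℕ | ∀ k : ℕ, k₀ ≤ k →
        IsNormal (dilate k (rectSimplex ![2, 3, 6 * q + 5]))} :=
      fun k hk => normalDil _ k (by omega) (by omega) (Or.inl hk)
    apply le_antisymm (Nat.sInf_le hmem)
    by_contra hlt
    have := Nat.sInf_mem ⟨2, hmem⟩
    exact notNormal q (this 1 (by omega))
end

section
/- Let n ≥ 3, let r be an integer with 1 ≤ r ≤ n − 2, and let p₁, …, pₙ be distinct prime numbers. For each i ∈ {1, …, n}, let bᵢ be the unique integer with 0 ≤ bᵢ < pᵢ and bᵢ · ∏_{j ≠ i} pⱼ ≡ −1 (mod pᵢ). If there exists k ∈ {1, …, n} such that bᵢ = pᵢ − 1 for all i ≠ k and ∑_{i ≠ k} 1/pᵢ ≤ 1, then the dilation rΔ(p₁, …, pₙ) is not normal. -/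
theorem mem_rectSimplex_aux {n : ℕ} (p : Fin n → ℕ) (hp : ∀ i, 0 < p i) (x : Fin n → ℝ) :
    x ∈ rectSimplex p ↔ (∀ i, 0 ≤ x i) ∧ ∑ i, x i / (p i : ℝ) ≤ 1 := by
  have hp' : ∀ i, (0:ℝ) < p i := fun i => by exact_mod_cast hp i
  constructor
  · intro hx
    have hconv : Convex ℝ {x : Fin n → ℝ | (∀ i, 0 ≤ x i) ∧ ∑ i, x i / (p i : ℝ) ≤ 1} := by
      rintro y ⟨hy1, hy2⟩ z ⟨hz1, hz2⟩ a c ha hc hac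
      refine ⟨fun i => ?_, ?_⟩
      · have := hy1 i
        have := hz1 i
        simp only [Pi.add_apply, Pi.smul_apply, smul_eq_mul]
        positivity
      · have : ∑ i, (a • y + c • z) i / (p i : ℝ)
            = a * ∑ i, y i / (p i : ℝ) + c * ∑ i, z i / (p i : ℝ) := by
          rw [Finset.mul_sum, Finset.mul_sum, ← Finset.sum_add_distrib]
          refine Finset.sum_congr rfl fun i _ => ?_
          simp only [Pi.add_apply, Pi.smul_apply, smul_eq_mul]
          ring
        rw [this]
        nlinarith
    refine convexHull_min ?_ hconv hx
    rintro y (rfl | ⟨i, rfl⟩)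
    · simp
    · refine ⟨fun j => ?_, ?_⟩
      · by_cases h : j = i
        · subst h; simp
        · simp [h]
      · rw [Finset.sum_eq_single i]
        · simp [(hp' i).ne']
        · intro j _ h; simp [h]
        · simp
  · rintro ⟨h0, h1⟩
    have hc : Convex ℝ (rectSimplex p) := convex_convexHull ℝ _
    have h := hc.sum_mem (t := (Finset.univ : Finset (Option (Fin n))))
      (w := fun o => o.elim (1 - ∑ i, x i / (p i : ℝ)) (fun i => x i / (p i : ℝ)))
      (z := fun o => o.elim 0 (fun i => Pi.single i (p i : ℝ))) ?_ ?_ ?_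
    · rw [Fintype.sum_option] at h
      convert h using 1
      funext j
      simp only [Option.elim, smul_zero, zero_add, Finset.sum_apply, Pi.smul_apply, smul_eq_mul]
      rw [Finset.sum_eq_single j]
      · simp [(hp' j).ne']
      · intro i _ hij; simp [Ne.symm hij]
      · simp
    · rintro (_ | i) _
      · simpa using h1
      · exact div_nonneg (h0 i) (hp' i).le
    · rw [Fintype.sum_option]; simp
    · rintro (_ | i) _
      · exact subset_convexHull ℝ _ (Set.mem_insert _ _)
      · exact subset_convexHull ℝ _ (Set.mem_insert_of_mem _ ⟨i, rfl⟩)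

theorem mem_dilate_aux {n : ℕ} (p : Fin n → ℕ) (hp : ∀ i, 0 < p i) (r : ℕ) (hr : 1 ≤ r)
    (x : Fin n → ℝ) :
    x ∈ dilate r (rectSimplex p) ↔ (∀ i, 0 ≤ x i) ∧ ∑ i, x i / (p i : ℝ) ≤ r := by
  have hr' : (0:ℝ) < r := by exact_mod_cast hr
  constructor
  · rintro ⟨y, hy, rfl⟩
    rw [mem_rectSimplex_aux p hp] at hy
    refine ⟨fun i => mul_nonneg hr'.le (hy.1 i), ?_⟩
    have : ∑ i, ((r:ℝ) • y) i / (p i : ℝ) = r * ∑ i, y i / (p i : ℝ) := by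
      rw [Finset.mul_sum]
      refine Finset.sum_congr rfl fun i _ => ?_
      simp only [Pi.smul_apply, smul_eq_mul]
      ring
    simp only [this]
    nlinarith [hy.2]
  · rintro ⟨h0, h1⟩
    refine ⟨(r:ℝ)⁻¹ • x, ?_, ?_⟩
    · rw [mem_rectSimplex_aux p hp]
      refine ⟨fun i => mul_nonneg (inv_nonneg.2 hr'.le) (h0 i), ?_⟩
      have : ∑ i, ((r:ℝ)⁻¹ • x) i / (p i : ℝ) = (r:ℝ)⁻¹ * ∑ i, x i / (p i : ℝ) := by
        rw [Finset.mul_sum]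
        refine Finset.sum_congr rfl fun i _ => ?_
        simp only [Pi.smul_apply, smul_eq_mul]
        ring
      rw [this, inv_mul_le_iff₀ hr']
      linarith
    · simp [smul_smul, hr'.ne']

theorem dilate_dilate_aux {n : ℕ} (t r : ℕ) (P : Set (Fin n → ℝ)) :
    dilate t (dilate r P) = dilate (t * r) P := by
  unfold dilate
  rw [Set.image_image]
  simp [smul_smul]

/-- real weight = integer weight divided by the product -/
theorem weight_aux {n : ℕ} (p : Fin n → ℕ) (hp : ∀ i, 0 < p i) (z : Fin n → ℤ) :
    ∑ i, (z i : ℝ) / (p i : ℝ) =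
      ((∑ i, z i * ∏ j ∈ Finset.univ.erase i, (p j : ℤ) : ℤ) : ℝ) / ((∏ j, (p j : ℤ) : ℤ) : ℝ) := by
  rw [Int.cast_sum, Finset.sum_div]
  refine Finset.sum_congr rfl fun i _ => ?_
  have h1 : (∏ j, (p j : ℤ)) = p i * ∏ j ∈ Finset.univ.erase i, (p j : ℤ) :=
    (Finset.mul_prod_erase _ _ (Finset.mem_univ i)).symm
  have h2 : ((∏ j ∈ Finset.univ.erase i, (p j : ℤ) : ℤ) : ℝ) ≠ 0 := by
    have : (∏ j ∈ Finset.univ.erase i, (p j : ℤ)) ≠ 0 :=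
      Finset.prod_ne_zero_iff.2 fun j _ => by have := hp j; positivity
    exact_mod_cast this
  have h3 : (p i : ℝ) ≠ 0 := by have := hp i; positivity
  rw [h1, Int.cast_mul, Int.cast_mul, Int.cast_natCast]
  field_simp

theorem weight_modEq_aux {n : ℕ} (p : Fin n → ℕ) (z : Fin n → ℤ) (i : Fin n) :
    Int.ModEq (p i) (∑ i, z i * ∏ j ∈ Finset.univ.erase i, (p j : ℤ))
      (z i * ∏ j ∈ Finset.univ.erase i, (p j : ℤ)) := by
  rw [← Finset.add_sum_erase _ _ (Finset.mem_univ i)]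
  have : (p i : ℤ) ∣ ∑ l ∈ Finset.univ.erase i, z l * ∏ j ∈ Finset.univ.erase l, (p j : ℤ) := by
    refine Finset.dvd_sum fun l hl => Dvd.dvd.mul_left ?_ _
    exact Finset.dvd_prod_of_mem (fun j => (p j : ℤ))
      (Finset.mem_erase.2 ⟨(Finset.ne_of_mem_erase hl).symm, Finset.mem_univ i⟩)
  have h2 := (Int.modEq_zero_iff_dvd.2 this).add_left (z i * ∏ j ∈ Finset.univ.erase i, (p j : ℤ))
  simpa using h2

/-- Let `p₁, …, pₙ` be distinct primes, `1 ≤ r ≤ n - 2`, and for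
each `i` let `bᵢ` be the unique integer in `[0, pᵢ)` with
`bᵢ · ∏_{j ≠ i} pⱼ ≡ -1 (mod pᵢ)`. If for some `k` we have `bᵢ = pᵢ - 1` for all
`i ≠ k` and `∑_{i ≠ k} 1/pᵢ ≤ 1`, then `rΔ(p₁, …, pₙ)` is not normal. -/
theorem stmt_16 (n : ℕ) (hn : 3 ≤ n) (r : ℕ) (hr1 : 1 ≤ r) (hr2 : r ≤ n - 2)
    (p : Fin n → ℕ) (hp : ∀ i, (p i).Prime) (hinj : Function.Injective p)
    (b : Fin n → ℕ) (hb : ∀ i, b i < p i)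
    (hbmod : ∀ i, Int.ModEq (p i)
      ((b i : ℤ) * ∏ j ∈ Finset.univ.erase i, (p j : ℤ)) (-1))
    (hk : ∃ k, (∀ i, i ≠ k → b i = p i - 1) ∧
      ∑ i ∈ Finset.univ.erase k, (1 : ℝ) / (p i : ℝ) ≤ 1) :
    ¬ IsNormal (dilate r (rectSimplex p)) := by
  obtain ⟨k, hbk, hsum⟩ := hk
  have hpos : ∀ i, 0 < p i := fun i => (hp i).pos
  have hposR : ∀ i, (0:ℝ) < p i := fun i => by exact_mod_cast hpos i
  set q : Fin n → ℤ := fun i => ∏ j ∈ Finset.univ.erase i, (p j : ℤ) with hq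
  set N : ℤ := ∏ j, (p j : ℤ) with hN
  have hNpos : 0 < N := Finset.prod_pos fun j _ => by exact_mod_cast hpos j
  have hNR : (0:ℝ) < N := by exact_mod_cast hNpos
  have hqnn : ∀ i, 0 ≤ q i := fun i => Finset.prod_nonneg fun j _ => by positivity
  have hpq : ∀ i, (p i : ℤ) * q i = N := fun i => Finset.mul_prod_erase _ (fun j => (p j : ℤ)) (Finset.mem_univ i)
  -- the integer m
  have hdvd : N ∣ (∑ i, (b i : ℤ) * q i) + 1 := by
    refine Finset.prod_dvd_of_coprime ?_ ?_
    · intro i _ j _ hij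
      have := (Nat.coprime_primes (hp i) (hp j)).2 (fun h => hij (hinj h))
      exact Nat.isCoprime_iff_coprime.2 this
    · intro i _
      have h1 := weight_modEq_aux p (fun i => (b i : ℤ)) i
      have h2 := (h1.trans (hbmod i)).add_right 1
      exact Int.modEq_zero_iff_dvd.1 (by simpa using h2)
  obtain ⟨m, hm⟩ := hdvd
  have hmR : ∑ i, (b i : ℝ) / (p i : ℝ) = m - 1 / N := by
    have h1 := weight_aux p hpos (fun i => (b i : ℤ))
    simp only [Int.cast_natCast] at h1
    rw [h1]
    have h2 : (∑ i, (b i : ℤ) * q i) = N * m - 1 := by linarith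
    change (((∑ i, (b i : ℤ) * q i) : ℤ) : ℝ) / (N : ℝ) = _
    rw [h2]
    push_cast
    field_simp
  have hmn : (n:ℤ) - 2 < m := by
    have h1 : (n:ℝ) - 2 ≤ ∑ i, (b i : ℝ) / (p i : ℝ) := by
      rw [← Finset.add_sum_erase _ _ (Finset.mem_univ k)]
      have h2 : ∑ i ∈ Finset.univ.erase k, (b i : ℝ) / (p i : ℝ) =
          ∑ i ∈ Finset.univ.erase k, (1 - (1 : ℝ) / (p i : ℝ)) := by
        refine Finset.sum_congr rfl fun i hi => ?_
        rw [hbk i (Finset.ne_of_mem_erase hi), Nat.cast_sub (hpos i)]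
        have := (hposR i).ne'
        field_simp
        simp
      rw [h2, Finset.sum_sub_distrib]
      have h3 : (0:ℝ) ≤ (b k : ℝ) / (p k : ℝ) := by positivity
      have h4 : ∑ i ∈ Finset.univ.erase k, (1:ℝ) = n - 1 := by
        simp [Finset.card_erase_of_mem, Nat.cast_sub (show 1 ≤ n by omega)]
      linarith
    have h5 : (0:ℝ) < 1 / N := by positivity
    have : (n:ℝ) - 2 < m := by linarith
    exact_mod_cast this
  lift m to ℕ using (by omega) with t
  have ht : r < t := by omega
  intro hnorm
  -- the bad point
  set c : ℕ := t * r - t with hc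
  have hcle : t ≤ t * r := Nat.le_mul_of_pos_right t hr1
  have hcz : (c : ℤ) = t * r - t := by rw [hc, Nat.cast_sub hcle]; push_cast; rfl
  set x : Fin n → ℤ := fun i => b i + (if i = k then (c : ℤ) * p i else 0) with hx
  have hwx : ∑ i, x i * q i = N * (t * r) - 1 := by
    have : ∑ i, x i * q i = ∑ i, (b i : ℤ) * q i + c * N := by
      simp only [hx, add_mul, Finset.sum_add_distrib, ite_mul, zero_mul, Finset.sum_ite_eq',
        Finset.mem_univ, if_true]
      rw [mul_assoc, hpq]
    rw [this, hcz]
    linear_combination hm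
  have hxnn : ∀ i, 0 ≤ x i := fun i => by
    simp only [hx]; split_ifs <;> positivity
  obtain ⟨f, hf, hxf⟩ := hnorm t (by omega) (fun i => (x i : ℝ)) (by
    rw [dilate_dilate_aux, mem_dilate_aux p hpos _ (by omega)]
    refine ⟨fun i => by exact_mod_cast hxnn i, ?_⟩
    rw [weight_aux p hpos x]
    change (((∑ i, x i * q i) : ℤ) : ℝ) / (N : ℝ) ≤ _
    rw [hwx, div_le_iff₀ hNR]
    push_cast
    linarith) (fun i => ⟨x i, rfl⟩)
  choose hf1 hf2 using hf
  choose z hz using hf2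
  have hznn : ∀ j i, 0 ≤ z j i := fun j i => by
    have := ((mem_dilate_aux p hpos r hr1 _).1 (hf1 j)).1 i
    rw [hz] at this
    exact_mod_cast this
  have hwz : ∀ j, ∑ i, z j i * q i ≤ r * N := fun j => by
    have := ((mem_dilate_aux p hpos r hr1 _).1 (hf1 j)).2
    simp only [hz] at this
    rw [weight_aux p hpos (z j)] at this
    change (((∑ i, z j i * q i) : ℤ) : ℝ) / (N : ℝ) ≤ _ at this
    rw [div_le_iff₀ hNR] at this
    exact_mod_cast this
  have hxz : ∀ i, x i = ∑ j, z j i := fun i => by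
    have := congrFun hxf i
    simp only [Finset.sum_apply, hz] at this
    exact_mod_cast this
  have hd : ∑ j, (r * N - ∑ i, z j i * q i) = 1 := by
    have h1 : ∑ j, ∑ i, z j i * q i = N * (t * r) - 1 := by
      rw [← hwx, Finset.sum_comm]
      refine Finset.sum_congr rfl fun i _ => ?_
      rw [hxz, Finset.sum_mul]
    rw [Finset.sum_sub_distrib, h1]
    simp
    ring
  have hex : ∃ j, r * N - ∑ i, z j i * q i ≠ 0 := by
    by_contra! hcon
    rw [Finset.sum_eq_zero fun j _ => hcon j] at hd
    omega
  obtain ⟨j, hj⟩ := hex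
  have hj1 : r * N - ∑ i, z j i * q i ≤ 1 := by
    rw [← hd]
    exact Finset.single_le_sum (f := fun j => r * N - ∑ i, z j i * q i)
      (fun j _ => sub_nonneg.2 (hwz j)) (Finset.mem_univ j)
  have hjw : ∑ i, z j i * q i = r * N - 1 := by
    have := hwz j
    omega
  have hbz : ∀ i, (b i : ℤ) ≤ z j i := fun i => by
    have h1 := weight_modEq_aux p (z j) i
    change Int.ModEq (p i) (∑ i, z j i * q i) (z j i * q i) at h1
    have h2 : Int.ModEq (p i) (r * N - 1) (-1) := by
      have : (p i : ℤ) ∣ r * N := Dvd.dvd.mul_left ⟨q i, (hpq i).symm⟩ _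
      simpa using (Int.modEq_zero_iff_dvd.2 this).sub_right 1
    rw [hjw] at h1
    have h3 : Int.ModEq (p i) (z j i * q i) (b i * q i) :=
      h1.symm.trans (h2.trans (hbmod i).symm)
    have hcop : IsCoprime (p i : ℤ) (q i) := by
      refine IsCoprime.prod_right fun l hl => Nat.isCoprime_iff_coprime.2 ?_
      exact (Nat.coprime_primes (hp i) (hp l)).2
        (fun h => Finset.ne_of_mem_erase hl (hinj h).symm)
    have h4 : (p i : ℤ) ∣ z j i - b i := by
      have h5 := h3.symm.dvd
      rw [← sub_mul] at h5
      exact hcop.dvd_of_dvd_mul_right h5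
    obtain ⟨e, he⟩ := h4
    have hbi : (b i : ℤ) < p i := by exact_mod_cast hb i
    have := hznn j i
    have : 0 ≤ e := by
      by_contra! hcon
      have : (p i : ℤ) * e ≤ p i * (-1) := mul_le_mul_of_nonneg_left (by omega) (by positivity)
      linarith
    have : 0 ≤ (p i : ℤ) * e := by positivity
    linarith
  have hfin : ∑ i, (b i : ℤ) * q i ≤ ∑ i, z j i * q i :=
    Finset.sum_le_sum fun i _ => mul_le_mul_of_nonneg_right (hbz i) (hqnn i)
  have h6 : N * t ≤ N * r := by linarith
  have h7 := le_of_mul_le_mul_left h6 hNpos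
  omega
end
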